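/- The kernel K = Ker(φ) ≤ P_4 is generated by the five elements c_{31}, c_{22}, c_{13}, d_0 = c_{12}, d_1 = c_{21}^{−1}c_{12}c_{21}, and K is presented by these five generators together with the following relations, for all m_1 ∈ ℤ: (i) with m = 2m_1: (c_{13}^{(c_{13}c_{22})^{m_1}})^{d_0} = c_{13}^{c_{22}^{m} c_{31}^{−1} c_{22}^{−m} (c_{22}c_{13})^{m_1}} and (c_{31}^{c_{22}^{−m}(c_{13}c_{22})^{m_1}})^{d_0} = c_{31}^{c_{22}^{−m}(c_{22}c_{13})^{m_1}}; (ii) with m = 2m_1+1: (c_{13}^{(c_{22}c_{13})^{m_1−1}c_{22}^{2}})^{d_1} = c_{13}^{c_{22}^{m} c_{31}^{−1} c_{22}^{−(m−1)} (c_{13}c_{22})^{m_1}} and (c_{31}^{c_{22}^{−(m+1)}(c_{22}c_{13})^{m_1}c_{22}^{2}})^{d_1} = c_{31}^{c_{22}^{−(m−1)}(c_{13}c_{22})^{m_1}}. -/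

import Mathlib

/-!
The starting point is that modulo its central full twist `z` the group `P_4` is a semidirect product
`F₃ ⋊ F₂` (`PB.core`, `Core.pb`), with `F₃` generated by `A₁₄`, `A₃₄` and `w = c₃₁`, and `F₂` by
`u = A₁₂` and `v = A₂₃`. Write also `y = c₂₂`, `e = c₁₃`. Up to powers of `z`, `c₂₁` is `u w⁻¹`,
`y` is `A₃₄ u` and `d₀` is `v w⁻¹`; exactly, `A₁₄ = d₀ e⁻¹`. Conjugation `g ↦ u⁻¹ g u` fixes `w` and
`y` and sends `e` to `y⁻¹ e y`, `d₀` to `d₁`, and `d₁` to `y⁻² e y d₀ e⁻¹ y` (`Core.action`).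

Put `e_n = y⁻ⁿ e yⁿ` and let `d_n` be the image of `d₀` under the `n`-th power of this conjugation.
Formula by formula, the relations proposed for `K` say that, for every integer `n`, `d_n` commutes
with `w` and `d_n⁻¹ e_n d_n = w e_n w⁻¹` (`rels_iff_good`). This family is invariant under the shift
`n ↦ n + 1` (`good_shift`). Two things follow. In `P_4`, where the shift is conjugation by `u`, all
the relations follow from the case `n = 0` (`good_of_conj`), which gives a map from the presented
group `Q` to `P_4`. And the shift defines an automorphism of `Q`, so that `Q ⋊ ℤ` can be formed.

The relations of `P_4` modulo the full twist hold in `Q ⋊ ℤ`, where `u⁻¹` goes to the generator of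
`ℤ` (`Q.core_SD`); their verification uses the relations of `Q` only for `n = 0` and `n = 2`, and the
expression of `d₂` through `d₀`. The composite `Q → P_4 → Q ⋊ ℤ` is the inclusion of `Q`, so
`Q → P_4` is injective (`Q.toP4_injective`).

The image of `Q` is stable under conjugation by `u` in both directions, hence normal. It contains
`c₃₁, c₂₂, c₁₃, c₁₂`, while `c₁₁` and `c₂₁` commute, so the quotient map of `P_4` by this image
factors through `φ` via `(i, j) ↦ c₁₁ⁱ c₂₁ʲ`; therefore the image is the whole kernel of `φ`
(`Q.toP4_range_eq_ker`).
-/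

namespace Paper

/-- Generators `A_{i,j}`, `1 ≤ i < j ≤ 4`, of the pure braid group `P_4`. -/
abbrev PGen := {p : ℕ × ℕ // 1 ≤ p.1 ∧ p.1 < p.2 ∧ p.2 ≤ 4}

/-- The generator `A_{i,j}` as an element of the free group (junk value `1` out of range). -/
def fA (i j : ℕ) : FreeGroup PGen :=
  if h : 1 ≤ i ∧ i < j ∧ j ≤ 4 then FreeGroup.of ⟨(i, j), h⟩ else 1

/-- Conjugation `a^b = b⁻¹ * a * b`. -/
def cj {G : Type*} [Group G] (a b : G) : G := b⁻¹ * a * b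

/-- Commutator `[a, b] = a⁻¹ * b⁻¹ * a * b`. -/
def cm {G : Type*} [Group G] (a b : G) : G := a⁻¹ * b⁻¹ * a * b

/-- The defining relations of the pure braid group `P_4` (`ε = ±1`):
`A_{i,k}^{-ε}A_{k,j}A_{i,k}^{ε} = (A_{i,j}A_{k,j})^{ε}A_{k,j}(A_{i,j}A_{k,j})^{-ε}` for `i<k<j`;
`A_{k,m}^{-ε}A_{k,j}A_{k,m}^{ε} = (A_{k,j}A_{m,j})^{ε}A_{k,j}(A_{k,j}A_{m,j})^{-ε}` for `k<m<j`;
`A_{i,m}^{-ε}A_{k,j}A_{i,m}^{ε} = [A_{i,j}^{-ε},A_{m,j}^{-ε}]^{ε}A_{k,j}[A_{i,j}^{-ε},A_{m,j}^{-ε}]^{-ε}`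
for `i<k<m<j`; and `A_{i,m}^{-ε}A_{k,j}A_{i,m}^{ε} = A_{k,j}` for `k<i, m<j`, or `m<k`. -/
def P4Rels : Set (FreeGroup PGen) :=
  {r | ∃ e : ℤ, (e = 1 ∨ e = -1) ∧
    ((∃ i k j : ℕ, 1 ≤ i ∧ i < k ∧ k < j ∧ j ≤ 4 ∧
        r = (fA i k) ^ (-e) * fA k j * (fA i k) ^ e *
            ((fA i j * fA k j) ^ e * fA k j * (fA i j * fA k j) ^ (-e))⁻¹) ∨
     (∃ k m j : ℕ, 1 ≤ k ∧ k < m ∧ m < j ∧ j ≤ 4 ∧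
        r = (fA k m) ^ (-e) * fA k j * (fA k m) ^ e *
            ((fA k j * fA m j) ^ e * fA k j * (fA k j * fA m j) ^ (-e))⁻¹) ∨
     (∃ i k m j : ℕ, 1 ≤ i ∧ i < k ∧ k < m ∧ m < j ∧ j ≤ 4 ∧
        r = (fA i m) ^ (-e) * fA k j * (fA i m) ^ e *
            ((cm ((fA i j) ^ (-e)) ((fA m j) ^ (-e))) ^ e * fA k j *
             (cm ((fA i j) ^ (-e)) ((fA m j) ^ (-e))) ^ (-e))⁻¹) ∨
     (∃ i m k j : ℕ, 1 ≤ i ∧ i < m ∧ m ≤ 4 ∧ 1 ≤ k ∧ k < j ∧ j ≤ 4 ∧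
        ((k < i ∧ m < j) ∨ m < k) ∧
        r = (fA i m) ^ (-e) * fA k j * (fA i m) ^ e * (fA k j)⁻¹))}

/-- The pure braid group `P_4`, given by its presentation. -/
abbrev P4 := PresentedGroup P4Rels

/-- The generator `A_{i,j}` as an element of `P_4` (junk value `1` out of range). -/
def pA (i j : ℕ) : P4 :=
  if h : 1 ≤ i ∧ i < j ∧ j ≤ 4 then PresentedGroup.of ⟨(i, j), h⟩ else 1

/-- `c_{11} = A_{12}⁻¹`. -/
def c11 : P4 := (pA 1 2)⁻¹
/-- `c_{21} = A_{23}⁻¹A_{13}⁻¹`. -/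
def c21 : P4 := (pA 2 3)⁻¹ * (pA 1 3)⁻¹
/-- `c_{12} = A_{13}⁻¹A_{12}⁻¹`. -/
def c12 : P4 := (pA 1 3)⁻¹ * (pA 1 2)⁻¹
/-- `c_{31} = A_{34}⁻¹A_{24}⁻¹A_{14}⁻¹`. -/
def c31 : P4 := (pA 3 4)⁻¹ * (pA 2 4)⁻¹ * (pA 1 4)⁻¹
/-- `c_{22} = A_{24}⁻¹A_{14}⁻¹A_{23}⁻¹A_{13}⁻¹`. -/
def c22 : P4 := (pA 2 4)⁻¹ * (pA 1 4)⁻¹ * (pA 2 3)⁻¹ * (pA 1 3)⁻¹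
/-- `c_{13} = A_{14}⁻¹A_{13}⁻¹A_{12}⁻¹`. -/
def c13 : P4 := (pA 1 4)⁻¹ * (pA 1 3)⁻¹ * (pA 1 2)⁻¹


/-- `d_0 = c_{12}`. -/
def d0 : P4 := c12
/-- `d_1 = c_{21}⁻¹ c_{12} c_{21}`. -/
def d1 : P4 := c21⁻¹ * c12 * c21

/-- Abstract generators `x_{31}, x_{22}, x_{13}, t_0, t_1` for the presentation of `Ker(φ)`
in Proposition 4.6. -/
inductive KGen5
  | x31 | x22 | x13 | t0 | t1
  deriving DecidableEq

namespace KGen5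
open FreeGroup
/-- The defining relations of Proposition 4.6, for all `m₁ ∈ ℤ`:
with `m = 2m₁`:
`(x_{13}^{(x_{13}x_{22})^{m₁}})^{t_0} = x_{13}^{x_{22}^m x_{31}⁻¹ x_{22}^{-m}(x_{22}x_{13})^{m₁}}`,
`(x_{31}^{x_{22}^{-m}(x_{13}x_{22})^{m₁}})^{t_0} = x_{31}^{x_{22}^{-m}(x_{22}x_{13})^{m₁}}`;
with `m = 2m₁+1`:
`(x_{13}^{(x_{22}x_{13})^{m₁-1}x_{22}^2})^{t_1}
  = x_{13}^{x_{22}^m x_{31}⁻¹ x_{22}^{-(m-1)}(x_{13}x_{22})^{m₁}}`,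
`(x_{31}^{x_{22}^{-(m+1)}(x_{22}x_{13})^{m₁}x_{22}^2})^{t_1}
  = x_{31}^{x_{22}^{-(m-1)}(x_{13}x_{22})^{m₁}}`. -/
def rels : Set (FreeGroup KGen5) :=
  {r | ∃ m₁ : ℤ,
    r = cj (cj (of x13) ((of x13 * of x22) ^ m₁)) (of t0) *
        (cj (of x13) (of x22 ^ (2 * m₁) * (of x31)⁻¹ * of x22 ^ (-(2 * m₁)) *
                      (of x22 * of x13) ^ m₁))⁻¹ ∨
    r = cj (cj (of x31) (of x22 ^ (-(2 * m₁)) * (of x13 * of x22) ^ m₁)) (of t0) *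
        (cj (of x31) (of x22 ^ (-(2 * m₁)) * (of x22 * of x13) ^ m₁))⁻¹ ∨
    r = cj (cj (of x13) ((of x22 * of x13) ^ (m₁ - 1) * of x22 ^ (2 : ℤ))) (of t1) *
        (cj (of x13) (of x22 ^ (2 * m₁ + 1) * (of x31)⁻¹ * of x22 ^ (-(2 * m₁)) *
                      (of x13 * of x22) ^ m₁))⁻¹ ∨
    r = cj (cj (of x31) (of x22 ^ (-(2 * m₁ + 2)) * (of x22 * of x13) ^ m₁ *
                         of x22 ^ (2 : ℤ))) (of t1) *
        (cj (of x31) (of x22 ^ (-(2 * m₁)) * (of x13 * of x22) ^ m₁))⁻¹}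
end KGen5

/-! ### The relations of `K` as a shift-invariant family -/

/-- `e_n = y⁻ⁿ e yⁿ`. -/
def eSh {G : Type*} [Group G] (y e : G) (n : ℤ) : G := y ^ (-n) * e * y ^ n

/-- The even-indexed elements `d_{2k}` of the doubly infinite family generated by `d_0 = t`. -/
def dEven {G : Type*} [Group G] (y e t : G) (k : ℤ) : G :=
  y ^ (-(2 * k)) * (e * y) ^ k * t * (y * e) ^ (-k) * y ^ (2 * k)

/-- The odd-indexed elements `d_{2k+1}` of the doubly infinite family generated by `d_1 = t`. -/
def dOdd {G : Type*} [Group G] (y e t : G) (k : ℤ) : G :=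
  y ^ (-(2 * k + 1)) * (e * y) ^ k * y * t * (e * y) ^ (-k) * y ^ (2 * k)

/-- `t` commutes with `w`, and `e^t = e^(w⁻¹)` in the notation `a^b = b⁻¹ * a * b`. -/
def Base {G : Type*} [Group G] (w e t : G) : Prop :=
  w * t = t * w ∧ e * t = t * (w * e * w⁻¹)

/-- The relations of `K`, in the form `Base w e_n d_n` for every integer `n`. -/
def Good {G : Type*} [Group G] (w y e t₀ t₁ : G) : Prop :=
  ∀ k : ℤ, Base w (eSh y e (2 * k)) (dEven y e t₀ k) ∧
    Base w (eSh y e (2 * k + 1)) (dOdd y e t₁ k)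

lemma Base.map {G H : Type*} [Group G] [Group H] (τ : G →* H) {w e t : G} (h : Base w e t) :
    Base (τ w) (τ e) (τ t) :=
  ⟨by simpa using congrArg τ h.1, by simpa using congrArg τ h.2⟩

lemma mul_zpow_swap {G : Type*} [Group G] (y e : G) (k : ℤ) :
    (e * y) ^ k = y⁻¹ * (y * e) ^ k * y := by
  have := conj_zpow (i := k) (a := y⁻¹) (b := y * e)
  rw [inv_inv] at this
  rw [← this]
  congr 1
  group

lemma dEven_shift {G : Type*} [Group G] (y e t : G) (k : ℤ) :
    dEven y (y⁻¹ * e * y) t k = dOdd y e t k := by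
  have h1 : y * (y⁻¹ * e * y) = e * y := by group
  have h2 : (y⁻¹ * e * y * y) ^ k = y⁻¹ * (e * y) ^ k * y := by
    have := conj_zpow (i := k) (a := y⁻¹) (b := e * y)
    rw [inv_inv] at this
    rw [← this]
    congr 1
    group
  have h3 : y ^ (-(2 * k + 1)) = y ^ (-(2 * k)) * y⁻¹ := by
    rw [neg_add, zpow_add, zpow_neg_one]
  rw [dEven, dOdd, h1, h2, h3]
  simp only [mul_assoc]

lemma dOdd_shift {G : Type*} [Group G] (y e t : G) (k : ℤ) :
    dOdd y (y⁻¹ * e * y) (y⁻¹ * y⁻¹ * e * y * t * e⁻¹ * y) k = dEven y e t (k + 1) := by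
  have h2 : ∀ j : ℤ, (y⁻¹ * e * y * y) ^ j = y⁻¹ * (e * y) ^ j * y := by
    intro j
    have := conj_zpow (i := j) (a := y⁻¹) (b := e * y)
    rw [inv_inv] at this
    rw [← this]
    congr 1
    group
  have h3 : y ^ (-(2 * k + 1)) = y ^ (-(2 * k)) * y⁻¹ := by
    rw [neg_add, zpow_add, zpow_neg_one]
  have h4 : y ^ (-(2 * (k + 1))) = y ^ (-(2 * k)) * y⁻¹ * y⁻¹ := by
    rw [show -(2 * (k + 1)) = -(2 * k) + -1 + -1 by ring, zpow_add, zpow_add, zpow_neg_one]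
  have h5 : y ^ (2 * (k + 1)) = y * y * y ^ (2 * k) := by
    rw [show 2 * (k + 1) = 1 + 1 + (2 * k) by ring, zpow_add, zpow_add, zpow_one]
  have h6 : (y * e) ^ (-(k + 1)) = (y * e) ^ (-k) * (e⁻¹ * y⁻¹) := by
    rw [neg_add, zpow_add, zpow_neg_one, mul_inv_rev]
  have h7 : (e * y) ^ (k + 1) = (e * y) ^ k * (e * y) := zpow_add_one _ _
  have h8 : (e * y) ^ (-k) = e * ((y * e) ^ (-k)) * e⁻¹ := by
    have := mul_zpow_swap e y (-k)
    rw [this]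
    group
  rw [dEven, dOdd, h2, h2, h3, h4, h5, h6, h7, h8]
  simp [mul_assoc]

lemma eSh_shift {G : Type*} [Group G] (y e : G) (n : ℤ) :
    eSh y (y⁻¹ * e * y) n = eSh y e (n + 1) := by
  rw [eSh, eSh, neg_add, zpow_add, zpow_neg_one, add_comm n 1, zpow_add, zpow_one]
  simp only [mul_assoc]

/-- The whole family of relations is invariant under the shift `n ↦ n + 1`. -/
lemma good_shift {G : Type*} [Group G] (w y e t₀ t₁ : G) :
    Good w y (y⁻¹ * e * y) t₁ (y⁻¹ * y⁻¹ * e * y * t₀ * e⁻¹ * y) ↔ Good w y e t₀ t₁ := by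
  unfold Good
  simp only [dEven_shift, dOdd_shift, eSh_shift]
  constructor
  · intro h k
    have h1 := (h (k - 1)).2
    rw [show 2 * (k - 1) + 1 + 1 = 2 * k by ring, sub_add_cancel] at h1
    exact ⟨h1, (h k).1⟩
  · intro h k
    have h1 := (h (k + 1)).1
    rw [show 2 * (k + 1) = 2 * k + 1 + 1 by ring] at h1
    exact ⟨(h k).2, h1⟩

/-- The relations hold for all `n` as soon as they hold for `n = 0` and the shift is realised by
conjugation by some element `s`. -/
lemma good_of_conj {G : Type*} [Group G] {w y e t₀ t₁ s : G} (hb : Base w e t₀)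
    (hw : s⁻¹ * w * s = w) (hy : s⁻¹ * y * s = y) (he : s⁻¹ * e * s = y⁻¹ * e * y)
    (h0 : s⁻¹ * t₀ * s = t₁) (h1 : s⁻¹ * t₁ * s = y⁻¹ * y⁻¹ * e * y * t₀ * e⁻¹ * y) :
    Good w y e t₀ t₁ := by
  set τ : G ≃* G := MulAut.conj s⁻¹ with hτ
  have τa : ∀ g, τ g = s⁻¹ * g * s := fun g => by simp [hτ]
  have tw : τ w = w := by rw [τa, hw]
  have ty : τ y = y := by rw [τa, hy]
  have te : τ e = y⁻¹ * e * y := by rw [τa, he]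
  have t0 : τ t₀ = t₁ := by rw [τa, h0]
  have t1 : τ t₁ = y⁻¹ * y⁻¹ * e * y * t₀ * e⁻¹ * y := by rw [τa, h1]
  have tE : ∀ n, τ (eSh y e n) = eSh y e (n + 1) := fun n => by
    rw [← eSh_shift]; simp only [eSh, map_mul, map_zpow, ty, te]
  have tev : ∀ k, τ (dEven y e t₀ k) = dOdd y e t₁ k := fun k => by
    rw [← dEven_shift]; simp only [dEven, map_mul, map_zpow, ty, te, t0]
  have tod : ∀ k, τ (dOdd y e t₁ k) = dEven y e t₀ (k + 1) := fun k => by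
    rw [← dOdd_shift]; simp only [dOdd, map_mul, map_zpow, ty, te, t1]
  have iff1 : ∀ k, Base w (eSh y e (2 * k)) (dEven y e t₀ k) ↔
      Base w (eSh y e (2 * k + 1)) (dOdd y e t₁ k) := fun k => by
    constructor
    · intro h
      simpa [tw, tE, tev] using h.map τ.toMonoidHom
    · intro h
      have := h.map τ.symm.toMonoidHom
      rw [← tE, ← tev] at this
      simpa [τ.symm_apply_eq.2 tw.symm] using this
  have iff2 : ∀ k, Base w (eSh y e (2 * k + 1)) (dOdd y e t₁ k) ↔
      Base w (eSh y e (2 * (k + 1))) (dEven y e t₀ (k + 1)) := fun k => by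
    rw [show 2 * (k + 1) = 2 * k + 1 + 1 by ring]
    constructor
    · intro h
      simpa [tw, tE, tod] using h.map τ.toMonoidHom
    · intro h
      have := h.map τ.symm.toMonoidHom
      rw [← tE, ← tod] at this
      simpa [τ.symm_apply_eq.2 tw.symm] using this
  have all : ∀ k, Base w (eSh y e (2 * k)) (dEven y e t₀ k) := fun k => by
    induction k using Int.induction_on with
    | zero => simpa [eSh, dEven] using hb
    | succ i ih => exact (iff2 _).1 ((iff1 _).1 ih)
    | pred i ih =>
      refine (iff1 _).2 ((iff2 _).2 ?_)
      rwa [sub_add_cancel]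
  exact fun k => ⟨all k, (iff1 k).1 (all k)⟩

/-- The relation `(w^P)^t = w^Q` says that `P t Q⁻¹` commutes with `w`. -/
lemma cj_commute_iff {G : Type*} [Group G] (w P Q t : G) :
    cj (cj w P) t * (cj w Q)⁻¹ = 1 ↔ w * (P * t * Q⁻¹) = P * t * Q⁻¹ * w := by
  rw [mul_inv_eq_one, cj, cj, cj, ← mul_right_inj (P * t), ← mul_left_inj (Q⁻¹)]
  simp [mul_assoc]

/-- The relation `(e^P)^t = e^(X w⁻¹ Q)` is the second equation of `Base`, with `e` replaced by
`X⁻¹ e X` and `t` by `X⁻¹ P t Q⁻¹`. -/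
lemma cj_conj_iff {G : Type*} [Group G] (w e P Q X t : G) :
    cj (cj e P) t * (cj e (X * w⁻¹ * Q))⁻¹ = 1 ↔
      X⁻¹ * e * X * (X⁻¹ * P * t * Q⁻¹) =
        X⁻¹ * P * t * Q⁻¹ * (w * (X⁻¹ * e * X) * w⁻¹) := by
  rw [mul_inv_eq_one, cj, cj, cj, ← mul_right_inj (X⁻¹ * P * t), ← mul_left_inj (Q⁻¹)]
  simp [mul_assoc]

/-- A family of elements satisfies the relations of `K` exactly when `Good` holds: the four types
of relations are, up to conjugation, the two equations in `Base` for even and for odd index. -/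
lemma rels_iff_good {G : Type*} [Group G] (g : KGen5 → G) :
    (∀ r ∈ KGen5.rels, FreeGroup.lift g r = 1) ↔
      Good (g .x31) (g .x22) (g .x13) (g .t0) (g .t1) := by
  have e1 : ∀ (w y e t : G) (k : ℤ),
      cj (cj e ((e * y) ^ k)) t *
        (cj e (y ^ (2 * k) * w⁻¹ * y ^ (-(2 * k)) * (y * e) ^ k))⁻¹ = 1 ↔
      eSh y e (2 * k) * dEven y e t k = dEven y e t k * (w * eSh y e (2 * k) * w⁻¹) := by
    intro w y e t k
    rw [mul_assoc (y ^ (2 * k) * w⁻¹), cj_conj_iff]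
    simp only [eSh, dEven, zpow_neg, mul_inv_rev, inv_inv, mul_assoc]
  have e2 : ∀ (w y e t : G) (k : ℤ),
      cj (cj w (y ^ (-(2 * k)) * (e * y) ^ k)) t *
        (cj w (y ^ (-(2 * k)) * (y * e) ^ k))⁻¹ = 1 ↔
      w * dEven y e t k = dEven y e t k * w := by
    intro w y e t k
    rw [cj_commute_iff]
    simp only [dEven, zpow_neg, mul_inv_rev, inv_inv, mul_assoc]
  have e3 : ∀ (w y e t : G) (k : ℤ),
      cj (cj e ((y * e) ^ (k - 1) * y ^ (2 : ℤ))) t *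
        (cj e (y ^ (2 * k + 1) * w⁻¹ * y ^ (-(2 * k)) * (e * y) ^ k))⁻¹ = 1 ↔
      eSh y e (2 * k + 1) * dOdd y e t k =
        dOdd y e t k * (w * eSh y e (2 * k + 1) * w⁻¹) := by
    intro w y e t k
    have hk : (y * e) ^ (k - 1) * y ^ (2 : ℤ) = e⁻¹ * ((e * y) ^ k * y) := by
      have h1 : (y * e) ^ k = y * e * (y * e) ^ (k - 1) := by
        rw [← zpow_one_add, add_sub_cancel]
      rw [mul_zpow_swap y e k, h1, zpow_two]
      simp [mul_assoc]
    have hc : cj e ((y * e) ^ (k - 1) * y ^ (2 : ℤ)) = cj e ((e * y) ^ k * y) := by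
      rw [hk, cj, cj]; simp [mul_assoc]
    rw [hc, mul_assoc (y ^ (2 * k + 1) * w⁻¹), cj_conj_iff]
    simp only [eSh, dOdd, zpow_neg, mul_inv_rev, inv_inv, mul_assoc]
  have e4 : ∀ (w y e t : G) (k : ℤ),
      cj (cj w (y ^ (-(2 * k + 2)) * (y * e) ^ k * y ^ (2 : ℤ))) t *
        (cj w (y ^ (-(2 * k)) * (e * y) ^ k))⁻¹ = 1 ↔
      w * dOdd y e t k = dOdd y e t k * w := by
    intro w y e t k
    have hk : y ^ (-(2 * k + 2)) * (y * e) ^ k * y ^ (2 : ℤ) =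
        y ^ (-(2 * k + 1)) * (e * y) ^ k * y := by
      rw [mul_zpow_swap y e k, show -(2 * k + 2) = -(2 * k + 1) + -1 by ring, zpow_add y _ (-1),
        zpow_neg_one, zpow_two]
      simp only [mul_assoc]
    rw [hk, cj_commute_iff]
    simp only [dOdd, zpow_neg, mul_inv_rev, inv_inv, mul_assoc]
  have mcj : ∀ a b : FreeGroup KGen5,
      FreeGroup.lift g (cj a b) = cj (FreeGroup.lift g a) (FreeGroup.lift g b) := by
    intro a b; simp [cj]
  constructor
  · intro h k
    have h1 := h _ ⟨k, Or.inl rfl⟩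
    have h2 := h _ ⟨k, Or.inr (Or.inl rfl)⟩
    have h3 := h _ ⟨k, Or.inr (Or.inr (Or.inl rfl))⟩
    have h4 := h _ ⟨k, Or.inr (Or.inr (Or.inr rfl))⟩
    simp only [map_mul, map_inv, mcj, map_zpow, FreeGroup.lift_apply_of] at h1 h2 h3 h4
    exact ⟨⟨(e2 _ _ _ _ _).1 h2, (e1 _ _ _ _ _).1 h1⟩,
      ⟨(e4 _ _ _ _ _).1 h4, (e3 _ _ _ _ _).1 h3⟩⟩
  · rintro h r ⟨k, rfl | rfl | rfl | rfl⟩ <;>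
      simp only [map_mul, map_inv, mcj, map_zpow, FreeGroup.lift_apply_of]
    · exact (e1 _ _ _ _ _).2 (h k).1.2
    · exact (e2 _ _ _ _ _).2 (h k).1.1
    · exact (e3 _ _ _ _ _).2 (h k).2.2
    · exact (e4 _ _ _ _ _).2 (h k).2.1

/-! ### The relations of `P_4` modulo its full twist -/

/-- The defining relations of `P_4` with `ε = 1`, for `u = A₁₂`, `x = A₁₃`, `v = A₂₃`, `a = A₁₄`,
`b = A₂₄`, `c = A₃₄`. -/
structure PB {G : Type*} [Group G] (u x v a b c : G) : Prop where
  uv : u⁻¹ * v * u = x * v * v * (x * v)⁻¹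
  ux : u⁻¹ * x * u = x * v * x * (x * v)⁻¹
  ub : u⁻¹ * b * u = a * b * b * (a * b)⁻¹
  ua : u⁻¹ * a * u = a * b * a * (a * b)⁻¹
  xc : x⁻¹ * c * x = a * c * c * (a * c)⁻¹
  xa : x⁻¹ * a * x = a * c * a * (a * c)⁻¹
  vc : v⁻¹ * c * v = b * c * c * (b * c)⁻¹
  vb : v⁻¹ * b * v = b * c * b * (b * c)⁻¹
  xb : x⁻¹ * b * x = a * c * a⁻¹ * c⁻¹ * b * (a * c * a⁻¹ * c⁻¹)⁻¹
  va : v⁻¹ * a * v = a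
  uc : u⁻¹ * c * u = c

/-- The relations of `P_4` modulo its full twist, as the semidirect product of the free group on
`a, w, c` by the free group on `u, v`. Here `u = A₁₂`, `v = A₂₃`, `a = A₁₄`, `c = A₃₄` and
`w = (A₁₄A₂₄A₃₄)⁻¹`. -/
structure Core {G : Type*} [Group G] (u v a c w : G) : Prop where
  uw : Commute u w
  uc : Commute u c
  vw : Commute v w
  va : Commute v a
  ua : u⁻¹ * a * u = w⁻¹ * c⁻¹ * a * c * w
  vc : v⁻¹ * c * v = a⁻¹ * w⁻¹ * c * w * a

lemma commute_of_conj {G : Type*} [Group G] {g h : G} (H : g⁻¹ * h * g = h) : Commute g h := by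
  have : h * g = g * h := by rw [← mul_right_inj g⁻¹]; simpa [mul_assoc] using H
  exact this.symm

lemma conj_of_commute {G : Type*} [Group G] {g h : G} (H : Commute g h) : g⁻¹ * h * g = h := by
  rw [mul_assoc, ← H.eq, inv_mul_cancel_left]

lemma conj_mul' {G : Type*} [Group G] (g p q : G) :
    g⁻¹ * (p * q) * g = (g⁻¹ * p * g) * (g⁻¹ * q * g) := by group

lemma PB.core {G : Type*} [Group G] {u x v a b c : G} (h : PB u x v a b c) :
    Core u v a c (a * b * c)⁻¹ := by
  have hab : Commute u (a * b) := commute_of_conj (by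
    rw [conj_mul', h.ua, h.ub]; group)
  have hbc : Commute v (b * c) := commute_of_conj (by
    rw [conj_mul', h.vb, h.vc]; group)
  have huc := commute_of_conj h.uc
  have hva := commute_of_conj h.va
  refine ⟨(hab.mul_right huc).inv_right, huc, ?_, hva, ?_, ?_⟩
  · rw [mul_assoc]; exact (hva.mul_right hbc).inv_right
  · rw [h.ua]; group
  · rw [h.vc]; group

lemma PB.commute_x_w {G : Type*} [Group G] {u x v a b c : G} (h : PB u x v a b c) :
    Commute x (a * b * c)⁻¹ := by
  refine (commute_of_conj ?_).inv_right
  rw [conj_mul', conj_mul', h.xa, h.xb, h.xc]; group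

lemma PB.commute_u_xv {G : Type*} [Group G] {u x v a b c : G} (h : PB u x v a b c) :
    Commute u (x * v) := by
  refine commute_of_conj ?_
  rw [conj_mul', h.ux, h.uv]; group

lemma PB.commute_v_ux {G : Type*} [Group G] {u x v a b c : G} (h : PB u x v a b c) :
    Commute v (u * x) := by
  have h1 : v * u = u * x * v * x⁻¹ := by
    rw [← mul_right_inj u⁻¹, ← mul_assoc, h.uv]; group
  calc v * (u * x) = (v * u) * x := by group
    _ = u * x * v := by rw [h1]; group

/-- Conjugation by `A₁₂A₁₃` acts on `A₁₄` as `(A₁₄A₂₄A₃₄)⁻¹` does; this is the main step in showing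
that the full twist commutes with `A₁₄`. -/
lemma PB.ux_a {G : Type*} [Group G] {u x v a b c : G} (h : PB u x v a b c) :
    u * x * a * (u * x)⁻¹ = (a * b * c)⁻¹ * a * (a * b * c) := by
  have hac : Commute x (a * c) := commute_of_conj (by
    rw [conj_mul', h.xa, h.xc]; group)
  have h1 : x * a * x⁻¹ = c⁻¹ * a * c := by
    have h2 : a = x * (a * c) * a * (a * c)⁻¹ * x⁻¹ := by
      calc a = x * (x⁻¹ * a * x) * x⁻¹ := by group
        _ = _ := by rw [h.xa]; group
    rw [hac.eq] at h2
    have h3 : a * c * (x * a) = a * (a * c) * x := by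
      have h4 : a * c * (x * a) = (a * c * x * a * (a * c)⁻¹ * x⁻¹) * (x * (a * c)) := by group
      rw [h4, ← h2, hac.eq]; group
    have h5 : x * a = c⁻¹ * a * c * x := by
      rw [← mul_right_inj (a * c), h3]; group
    rw [h5]; group
  have hab : Commute u (a * b) := h.core.uw.inv_right.mul_right h.core.uc.inv_right |> fun H => by
    simpa using H
  have h2 : u * a * u⁻¹ = (a * b)⁻¹ * a * (a * b) := by
    have h3 : u * (a * b) * a = a * u * (a * b) := by
      rw [← mul_right_inj u⁻¹, ← mul_left_inj ((a * b)⁻¹)]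
      calc _ = a * b * a * (a * b)⁻¹ := by group
        _ = u⁻¹ * a * u := h.ua.symm
        _ = _ := by group
    rw [hab.eq] at h3
    have h5 : u * a = (a * b)⁻¹ * a * (a * b) * u := by
      rw [← mul_right_inj (a * b), ← mul_assoc, h3, mul_assoc a, hab.eq]; group
    rw [h5]; group
  calc u * x * a * (u * x)⁻¹ = u * (x * a * x⁻¹) * u⁻¹ := by group
    _ = u * (c⁻¹ * a * c) * u⁻¹ := by rw [h1]
    _ = (u * c⁻¹) * a * (u * c⁻¹)⁻¹ := by group
    _ = (c⁻¹ * u) * a * (c⁻¹ * u)⁻¹ := by rw [h.core.uc.inv_right.eq]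
    _ = c⁻¹ * (u * a * u⁻¹) * c := by group
    _ = _ := by rw [h2]; group

/-- The full twist commutes with all generators. -/
lemma PB.twist_commute {G : Type*} [Group G] {u x v a b c : G} (h : PB u x v a b c) :
    Commute (u * x * v * (a * b * c)) u ∧ Commute (u * x * v * (a * b * c)) x ∧
    Commute (u * x * v * (a * b * c)) v ∧ Commute (u * x * v * (a * b * c)) a ∧
    Commute (u * x * v * (a * b * c)) b ∧ Commute (u * x * v * (a * b * c)) c := by
  have C := h.core
  have hx := h.commute_x_w
  have hux := h.ux_a
  have hxv := h.commute_u_xv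
  have hvux := h.commute_v_ux
  set w : G := (a * b * c)⁻¹ with hw
  have hw' : a * b * c = w⁻¹ := by rw [hw, inv_inv]
  rw [hw'] at hux ⊢
  have huxv : Commute (u * x * v) u := by
    rw [mul_assoc]; exact (Commute.refl u).mul_left hxv.symm
  have hvv : Commute (u * x * v) v := hvux.symm.mul_left (Commute.refl v)
  have hxx : Commute (u * x * v) x := by
    have : x = u⁻¹ * (u * x * v) * v⁻¹ := by group
    have H := (huxv.inv_right.mul_right (Commute.refl (u * x * v))).mul_right hvv.inv_right
    rwa [← this] at H
  have zu : Commute (u * x * v * w⁻¹) u := huxv.mul_left C.uw.symm.inv_left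
  have zx : Commute (u * x * v * w⁻¹) x := hxx.mul_left hx.symm.inv_left
  have zv : Commute (u * x * v * w⁻¹) v := hvv.mul_left C.vw.symm.inv_left
  have hdw : Commute (u * x * v) w := (C.uw.mul_left hx).mul_left C.vw
  have zw : Commute (u * x * v * w⁻¹) w := hdw.mul_left (Commute.refl w).inv_left
  have za : Commute (u * x * v * w⁻¹) a := by
    have h1 : u * x * v * a = w * a * w⁻¹ * (u * x * v) := by
      calc u * x * v * a = u * x * (v * a) := by group
        _ = (u * x * a * (u * x)⁻¹) * (u * x * v) := by rw [C.va.eq]; group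
        _ = _ := by rw [hux]
    calc u * x * v * w⁻¹ * a = w⁻¹ * (u * x * v * a) := by rw [hdw.inv_right.eq]; group
      _ = a * (w⁻¹ * (u * x * v)) := by rw [h1]; group
      _ = _ := by rw [hdw.inv_right.eq]
  have zc : Commute (u * x * v * w⁻¹) c := by
    have h1 : (u * x * v)⁻¹ * c * (u * x * v) = w⁻¹ * c * w := by
      calc (u * x * v)⁻¹ * c * (u * x * v) = v⁻¹ * (x⁻¹ * (u⁻¹ * c * u) * x) * v := by group
        _ = v⁻¹ * (a * c * a⁻¹) * v := by rw [h.uc, h.xc]; group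
        _ = (v⁻¹ * a * v) * (v⁻¹ * c * v) * (v⁻¹ * a * v)⁻¹ := by group
        _ = _ := by rw [h.va, C.vc]; group
    refine commute_of_conj ?_
    calc (u * x * v * w⁻¹)⁻¹ * c * (u * x * v * w⁻¹)
        = w * ((u * x * v)⁻¹ * c * (u * x * v)) * w⁻¹ := by group
      _ = c := by rw [h1]; group
  have zb : Commute (u * x * v * w⁻¹) b := by
    have : b = a⁻¹ * w⁻¹ * c⁻¹ := by rw [← hw']; group
    rw [this]
    exact (za.inv_right.mul_right zw.inv_right).mul_right zc.inv_right
  exact ⟨zu, zx, zv, za, zb, zc⟩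

/-- The relations of `P_4` follow from the semidirect product form, with the full twist set
to `1`. -/
lemma Core.pb {G : Type*} [Group G] {u v a c w : G} (C : Core u v a c w) :
    PB u (w * u⁻¹ * v⁻¹) v a (a⁻¹ * w⁻¹ * c⁻¹) c := by
  have vc' : v * c * v⁻¹ = w * a * c * a⁻¹ * w⁻¹ := by
    have hwa : Commute v (w * a) := C.vw.mul_right C.va
    calc v * c * v⁻¹ = v * ((w * a) * (v⁻¹ * c * v) * (w * a)⁻¹) * v⁻¹ := by rw [C.vc]; group
      _ = (v * (w * a)) * v⁻¹ * c * ((v * (w * a)) * v⁻¹)⁻¹ := by group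
      _ = _ := by rw [hwa.eq]; group
  have ua' : u * a * u⁻¹ = c * w * a * w⁻¹ * c⁻¹ := by
    have hcw : Commute u (c * w) := C.uc.mul_right C.uw
    calc u * a * u⁻¹ = u * ((c * w) * (u⁻¹ * a * u) * (c * w)⁻¹) * u⁻¹ := by rw [C.ua]; group
      _ = (u * (c * w)) * u⁻¹ * a * ((u * (c * w)) * u⁻¹)⁻¹ := by group
      _ = _ := by rw [hcw.eq]; group
  have hx : Commute (w * u⁻¹ * v⁻¹) w :=
    ((Commute.refl w).mul_left C.uw.inv_left).mul_left C.vw.inv_left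
  have xc : (w * u⁻¹ * v⁻¹)⁻¹ * c * (w * u⁻¹ * v⁻¹) = a * c * a⁻¹ := by
    calc (w * u⁻¹ * v⁻¹)⁻¹ * c * (w * u⁻¹ * v⁻¹)
        = v * ((u * w⁻¹) * c * (u * w⁻¹)⁻¹) * v⁻¹ := by group
      _ = v * (w⁻¹ * (u * c) * u⁻¹ * w) * v⁻¹ := by rw [C.uw.inv_right.eq]; group
      _ = (v * w⁻¹) * c * (v * w⁻¹)⁻¹ := by rw [C.uc.eq]; group
      _ = w⁻¹ * (v * c * v⁻¹) * w := by rw [C.vw.inv_right.eq]; group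
      _ = _ := by rw [vc']; group
  have xa : (w * u⁻¹ * v⁻¹)⁻¹ * a * (w * u⁻¹ * v⁻¹) = a * c * a * c⁻¹ * a⁻¹ := by
    calc (w * u⁻¹ * v⁻¹)⁻¹ * a * (w * u⁻¹ * v⁻¹)
        = v * ((u * w⁻¹) * a * (u * w⁻¹)⁻¹) * v⁻¹ := by group
      _ = v * (w⁻¹ * (u * a * u⁻¹) * w) * v⁻¹ := by rw [C.uw.inv_right.eq]; group
      _ = (v * w⁻¹) * c * (w * a * w⁻¹) * c⁻¹ * (v * w⁻¹)⁻¹ := by rw [ua']; group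
      _ = w⁻¹ * (v * c * v⁻¹) * ((v * w) * a * (v * w)⁻¹) * (v * c * v⁻¹)⁻¹ * w := by
          rw [C.vw.inv_right.eq]; group
      _ = w⁻¹ * (v * c * v⁻¹) * (w * (v * a) * v⁻¹ * w⁻¹) * (v * c * v⁻¹)⁻¹ * w := by
          rw [C.vw.eq]; group
      _ = _ := by rw [vc', C.va.eq]; group
  have huc : u⁻¹ * c * u = c := conj_of_commute C.uc
  have hva : v⁻¹ * a * v = a := conj_of_commute C.va
  have huw : u⁻¹ * w * u = w := conj_of_commute C.uw
  have hvw : v⁻¹ * w * v = w := conj_of_commute C.vw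
  have hxw := conj_of_commute hx
  have hxv : w * u⁻¹ * v⁻¹ * v = w * u⁻¹ := by group
  have split : ∀ g : G, g⁻¹ * (a⁻¹ * w⁻¹ * c⁻¹) * g =
      (g⁻¹ * a * g)⁻¹ * (g⁻¹ * w * g)⁻¹ * (g⁻¹ * c * g)⁻¹ := fun g => by group
  have c1 : w * u⁻¹ * v * (w * u⁻¹)⁻¹ = u⁻¹ * v * u := by
    calc w * u⁻¹ * v * (w * u⁻¹)⁻¹ = (w * u⁻¹) * v * (w * u⁻¹)⁻¹ := by group
      _ = u⁻¹ * (w * v) * w⁻¹ * u := by rw [← C.uw.inv_left.eq]; group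
      _ = _ := by rw [← C.vw.eq]; group
  refine ⟨?_, ?_, ?_, ?_, ?_, ?_, ?_, ?_, ?_, hva, huc⟩
  · rw [hxv, c1]
  · rw [hxv]
    have H := hx.symm
    calc u⁻¹ * (w * u⁻¹ * v⁻¹) * u = u⁻¹ * (w * u⁻¹ * v⁻¹ * w) * w⁻¹ * u := by group
      _ = u⁻¹ * w * (w * u⁻¹ * v⁻¹) * (u⁻¹ * w)⁻¹ := by rw [hx.eq]; group
      _ = _ := by rw [C.uw.inv_left.eq]
  · rw [split, C.ua, huw, huc]; group
  · rw [C.ua]; group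
  · rw [xc]; group
  · rw [xa]; group
  · rw [C.vc]; group
  · rw [split, C.vc, hvw, hva]; group
  · rw [split, xa, hxw, xc]; group

/-- The relations of `K`, and the action of `u = A₁₂` on its generators, in terms of the
semidirect product form of `P_4` and a central element `z`. -/
lemma Core.action {G : Type*} [Group G] {u v a c w z : G} (C : Core u v a c w)
    (hz : ∀ g, Commute z g) (y e t : G) (hy : y = z⁻¹ * c * u) (ht : t = z⁻¹ * v * w⁻¹)
    (he : e = a⁻¹ * t) :
    Base w e t ∧ u⁻¹ * w * u = w ∧ u⁻¹ * y * u = y ∧ u⁻¹ * e * u = y⁻¹ * e * y ∧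
      u⁻¹ * (u⁻¹ * t * u) * u = y⁻¹ * y⁻¹ * e * y * t * e⁻¹ * y := by
  have hwt : Commute w t := by
    rw [ht]
    exact (((hz w).symm.inv_right.mul_right C.vw.symm)).mul_right (Commute.refl w).inv_right
  have hta : Commute (t * w) a := by
    rw [ht, inv_mul_cancel_right]
    exact (hz a).inv_left.mul_left C.va
  have hyu : Commute u y := by
    rw [hy]
    exact ((hz u).symm.inv_right.mul_right C.uc).mul_right (Commute.refl u)
  have hat : t⁻¹ * a * t = w * a * w⁻¹ := by
    calc t⁻¹ * a * t = w * ((t * w)⁻¹ * a * (t * w)) * w⁻¹ := by group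
      _ = _ := by rw [conj_of_commute hta]
  have hce : Commute c e := by
    have h1 : Commute c (a⁻¹ * v * w⁻¹) := by
      have h2 : Commute c (v * a⁻¹ * w⁻¹) := by
        refine (commute_of_conj ?_).symm
        calc (v * a⁻¹ * w⁻¹)⁻¹ * c * (v * a⁻¹ * w⁻¹)
            = w * a * (v⁻¹ * c * v) * (w * a)⁻¹ := by group
          _ = c := by rw [C.vc]; group
      rwa [C.va.inv_right.eq] at h2
    have h3 : e = z⁻¹ * (a⁻¹ * v * w⁻¹) := by
      calc e = (a⁻¹ * z⁻¹) * v * w⁻¹ := by rw [he, ht]; group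
        _ = _ := by rw [← (hz a⁻¹).inv_left.eq]; group
    rw [h3]
    exact (hz c).symm.inv_right.mul_right h1
  have hue : u⁻¹ * e * u = y⁻¹ * e * y := by
    have h1 : y⁻¹ * e * y = u⁻¹ * (c⁻¹ * (z * e) * z⁻¹ * c) * u := by rw [hy]; group
    rw [h1, (hz e).eq]
    have h2 : c⁻¹ * (e * z) * z⁻¹ * c = c⁻¹ * e * c := by group
    rw [h2, conj_of_commute hce]
  refine ⟨⟨hwt, ?_⟩, conj_of_commute C.uw, conj_of_commute hyu, hue, ?_⟩
  · have h1 : t⁻¹ * e * t = w * e * w⁻¹ := by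
      calc t⁻¹ * e * t = (t⁻¹ * a * t)⁻¹ * t := by rw [he]; group
        _ = w * a⁻¹ * (w⁻¹ * t) := by rw [hat]; group
        _ = _ := by rw [hwt.inv_left.eq, he]; group
    rw [← h1]; group
  · have huc : u⁻¹ * c * u = c := conj_of_commute C.uc
    have huw : u⁻¹ * w * u = w := conj_of_commute C.uw
    have haa : u⁻¹ * (u⁻¹ * a * u) * u = w⁻¹ * (y⁻¹ * a * y) * w := by
      have h1 : y⁻¹ * a * y = c⁻¹ * (u⁻¹ * a * u) * c := by
        have h2 : y⁻¹ * a * y = u⁻¹ * c⁻¹ * (z * a) * z⁻¹ * c * u := by rw [hy]; group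
        have h3 : u⁻¹ * c⁻¹ * (a * z) * z⁻¹ * c * u = (c * u)⁻¹ * a * (c * u) := by group
        rw [h2, (hz a).eq, h3, ← C.uc.eq]; group
      calc u⁻¹ * (u⁻¹ * a * u) * u = u⁻¹ * (w⁻¹ * c⁻¹ * a * c * w) * u := by rw [C.ua]
        _ = (u⁻¹ * w * u)⁻¹ * (u⁻¹ * c * u)⁻¹ * (u⁻¹ * a * u)
            * (u⁻¹ * c * u) * (u⁻¹ * w * u) := by group
        _ = w⁻¹ * c⁻¹ * (u⁻¹ * a * u) * c * w := by rw [huc, huw]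
        _ = _ := by rw [h1]; group
    have hee : u⁻¹ * (u⁻¹ * e * u) * u = y⁻¹ * y⁻¹ * e * y * y := by
      have huy : u⁻¹ * y * u = y := conj_of_commute hyu
      calc u⁻¹ * (u⁻¹ * e * u) * u = u⁻¹ * (y⁻¹ * e * y) * u := by rw [hue]
        _ = (u⁻¹ * y * u)⁻¹ * (u⁻¹ * e * u) * (u⁻¹ * y * u) := by group
        _ = _ := by rw [huy, hue]; group
    have hya : y⁻¹ * a * y = u⁻¹ * (u⁻¹ * (t⁻¹ * a * t) * u) * u := by
      calc y⁻¹ * a * y = w * (u⁻¹ * (u⁻¹ * a * u) * u) * w⁻¹ := by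
            rw [haa]; simp only [mul_assoc, mul_inv_cancel_left, mul_inv_cancel, mul_one]
        _ = (u⁻¹ * (u⁻¹ * w * u) * u) * (u⁻¹ * (u⁻¹ * a * u) * u) *
            (u⁻¹ * (u⁻¹ * w * u) * u)⁻¹ := by rw [huw, huw]
        _ = _ := by rw [hat]; simp [mul_assoc]
    have hte : t * e⁻¹ = a := by rw [he]; group
    calc u⁻¹ * (u⁻¹ * t * u) * u
        = (u⁻¹ * (u⁻¹ * e * u) * u) * (u⁻¹ * (u⁻¹ * (t⁻¹ * a * t) * u) * u) := by
          rw [he]; group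
      _ = y⁻¹ * y⁻¹ * e * y * y * (y⁻¹ * (t * e⁻¹) * y) := by rw [hee, ← hya, hte]
      _ = _ := by group

/-! ### Homomorphisms into and out of `P_4` -/

/-- The two relations for `p = A_{i,j}`, `q = A_{k,j}`, `x = A_{i,k}` with `ε = 1` imply those with
`ε = -1`, because `x` commutes with `p * q`. -/
lemma inv_conj_of_pair {G : Type*} [Group G] {x p q : G}
    (hp : x⁻¹ * p * x = p * q * p * (p * q)⁻¹) (hq : x⁻¹ * q * x = p * q * q * (p * q)⁻¹) :
    x * p * x⁻¹ = (p * q)⁻¹ * p * (p * q) ∧ x * q * x⁻¹ = (p * q)⁻¹ * q * (p * q) := by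
  have h : Commute x (p * q) := commute_of_conj (by rw [conj_mul', hp, hq]; group)
  have key : ∀ g, x⁻¹ * g * x = p * q * g * (p * q)⁻¹ →
      x * g * x⁻¹ = (p * q)⁻¹ * g * (p * q) := by
    intro g hg
    have hg' : g = (p * q)⁻¹ * (x⁻¹ * g * x) * (p * q) := by rw [hg]; group
    calc x * g * x⁻¹ = x * ((p * q)⁻¹ * (x⁻¹ * g * x) * (p * q)) * x⁻¹ := by rw [← hg']
      _ = (x * (p * q)⁻¹) * (x⁻¹ * g * x) * (x * (p * q)⁻¹)⁻¹ := by group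
      _ = ((p * q)⁻¹ * x) * (x⁻¹ * g * x) * ((p * q)⁻¹ * x)⁻¹ := by rw [h.inv_right.eq]
      _ = _ := by group
  exact ⟨key p hp, key q hq⟩

lemma PB.xb_inv {G : Type*} [Group G] {u x v a b c : G} (h : PB u x v a b c) :
    x * b * x⁻¹ = (a⁻¹ * c⁻¹ * a * c)⁻¹ * b * (a⁻¹ * c⁻¹ * a * c) := by
  have h1 : x⁻¹ * ((a⁻¹ * c⁻¹ * a * c)⁻¹ * b * (a⁻¹ * c⁻¹ * a * c)) * x = b := by
    calc _ = ((x⁻¹ * a * x)⁻¹ * (x⁻¹ * c * x)⁻¹ * (x⁻¹ * a * x) * (x⁻¹ * c * x))⁻¹ *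
          (x⁻¹ * b * x) *
          ((x⁻¹ * a * x)⁻¹ * (x⁻¹ * c * x)⁻¹ * (x⁻¹ * a * x) * (x⁻¹ * c * x)) := by group
      _ = b := by rw [h.xa, h.xc, h.xb]; group
  calc x * b * x⁻¹ = x * (x⁻¹ * ((a⁻¹ * c⁻¹ * a * c)⁻¹ * b * (a⁻¹ * c⁻¹ * a * c)) * x) * x⁻¹ := by
        rw [h1]
    _ = _ := by group

lemma lift_fA {G : Type*} [Group G] (g : ℕ → ℕ → G) {i j : ℕ} (h : 1 ≤ i ∧ i < j ∧ j ≤ 4) :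
    FreeGroup.lift (fun p : PGen => g p.1.1 p.1.2) (fA i j) = g i j := by
  simp [fA, h]

/-- Elements satisfying the relations with `ε = 1` satisfy all the relations of `P_4`. -/
lemma PB.rels {G : Type*} [Group G] (g : ℕ → ℕ → G)
    (h : PB (g 1 2) (g 1 3) (g 2 3) (g 1 4) (g 2 4) (g 3 4)) :
    ∀ r ∈ P4Rels, FreeGroup.lift (fun p : PGen => g p.1.1 p.1.2) r = 1 := by
  have i123 := inv_conj_of_pair h.ux h.uv
  have i124 := inv_conj_of_pair h.ua h.ub
  have i134 := inv_conj_of_pair h.xa h.xc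
  have i234 := inv_conj_of_pair h.vb h.vc
  have iva : g 2 3 * g 1 4 * (g 2 3)⁻¹ = g 1 4 := by
    rw [(commute_of_conj h.va).eq, mul_inv_cancel_right]
  have iuc : g 1 2 * g 3 4 * (g 1 2)⁻¹ = g 3 4 := by
    rw [(commute_of_conj h.uc).eq, mul_inv_cancel_right]
  rintro r ⟨e, he, ⟨i, k, j, h1, h2, h3, h4, rfl⟩ | ⟨k, m, j, h1, h2, h3, h4, rfl⟩ |
    ⟨i, k, m, j, h1, h2, h3, h4, h5, rfl⟩ | ⟨i, m, k, j, h1, h2, h3, h4, h5, h6, h7, rfl⟩⟩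
  · simp only [map_mul, map_inv, map_zpow]
    rw [lift_fA g (i := i) (j := k) (by omega), lift_fA g (i := k) (j := j) (by omega),
      lift_fA g (i := i) (j := j) (by omega), mul_inv_eq_one]
    have : (i = 1 ∧ k = 2 ∧ j = 3) ∨ (i = 1 ∧ k = 2 ∧ j = 4) ∨ (i = 1 ∧ k = 3 ∧ j = 4) ∨
      (i = 2 ∧ k = 3 ∧ j = 4) := by omega
    rcases this with ⟨rfl, rfl, rfl⟩ | ⟨rfl, rfl, rfl⟩ | ⟨rfl, rfl, rfl⟩ | ⟨rfl, rfl, rfl⟩ <;>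
      rcases he with rfl | rfl <;> simp only [neg_neg, zpow_one, zpow_neg_one]
    exacts [h.uv, i123.2, h.ub, i124.2, h.xc, i134.2, h.vc, i234.2]
  · simp only [map_mul, map_inv, map_zpow]
    rw [lift_fA g (i := k) (j := m) (by omega), lift_fA g (i := k) (j := j) (by omega),
      lift_fA g (i := m) (j := j) (by omega), mul_inv_eq_one]
    have : (k = 1 ∧ m = 2 ∧ j = 3) ∨ (k = 1 ∧ m = 2 ∧ j = 4) ∨ (k = 1 ∧ m = 3 ∧ j = 4) ∨
      (k = 2 ∧ m = 3 ∧ j = 4) := by omega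
    rcases this with ⟨rfl, rfl, rfl⟩ | ⟨rfl, rfl, rfl⟩ | ⟨rfl, rfl, rfl⟩ | ⟨rfl, rfl, rfl⟩ <;>
      rcases he with rfl | rfl <;> simp only [neg_neg, zpow_one, zpow_neg_one]
    exacts [h.ux, i123.1, h.ua, i124.1, h.xa, i134.1, h.vb, i234.1]
  · simp only [cm, map_mul, map_inv, map_zpow]
    rw [lift_fA g (i := i) (j := m) (by omega), lift_fA g (i := k) (j := j) (by omega),
      lift_fA g (i := i) (j := j) (by omega), lift_fA g (i := m) (j := j) (by omega),
      mul_inv_eq_one]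
    obtain ⟨rfl, rfl, rfl, rfl⟩ : i = 1 ∧ k = 2 ∧ m = 3 ∧ j = 4 := by omega
    rcases he with rfl | rfl <;> simp only [neg_neg, zpow_one, zpow_neg_one, inv_inv]
    exacts [h.xb, h.xb_inv]
  · simp only [map_mul, map_inv, map_zpow]
    rw [lift_fA g (i := i) (j := m) (by omega), lift_fA g (i := k) (j := j) (by omega),
      mul_inv_eq_one]
    have : (i = 2 ∧ m = 3 ∧ k = 1 ∧ j = 4) ∨ (i = 1 ∧ m = 2 ∧ k = 3 ∧ j = 4) := by omega
    rcases this with ⟨rfl, rfl, rfl, rfl⟩ | ⟨rfl, rfl, rfl, rfl⟩ <;>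
      rcases he with rfl | rfl <;> simp only [neg_neg, zpow_one, zpow_neg_one]
    exacts [h.va, iva, h.uc, iuc]

lemma mk_fA {i j : ℕ} : PresentedGroup.mk P4Rels (fA i j) = pA i j := by
  unfold fA pA
  split_ifs
  · rfl
  · simp

lemma pb_P4 : PB (pA 1 2) (pA 1 3) (pA 2 3) (pA 1 4) (pA 2 4) (pA 3 4) := by
  have key : ∀ r s : FreeGroup PGen, r * s⁻¹ ∈ P4Rels →
      PresentedGroup.mk P4Rels r = PresentedGroup.mk P4Rels s := fun r s h => by
    rw [← mul_inv_eq_one, ← map_inv, ← map_mul]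
    exact PresentedGroup.one_of_mem h
  have k1 : ∀ i k j : ℕ, 1 ≤ i ∧ i < k ∧ k < j ∧ j ≤ 4 →
      (pA i k)⁻¹ * pA k j * pA i k = pA i j * pA k j * pA k j * (pA i j * pA k j)⁻¹ := by
    rintro i k j ⟨h1, h2, h3, h4⟩
    have := key _ _ ⟨1, Or.inl rfl, Or.inl ⟨i, k, j, h1, h2, h3, h4, rfl⟩⟩
    simpa only [map_mul, map_inv, map_zpow, mk_fA, zpow_one, zpow_neg_one] using this
  have k2 : ∀ k m j : ℕ, 1 ≤ k ∧ k < m ∧ m < j ∧ j ≤ 4 →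
      (pA k m)⁻¹ * pA k j * pA k m = pA k j * pA m j * pA k j * (pA k j * pA m j)⁻¹ := by
    rintro i k j ⟨h1, h2, h3, h4⟩
    have := key _ _ ⟨1, Or.inl rfl, Or.inr (Or.inl ⟨i, k, j, h1, h2, h3, h4, rfl⟩)⟩
    simpa only [map_mul, map_inv, map_zpow, mk_fA, zpow_one, zpow_neg_one] using this
  have k3 := key _ _ ⟨1, Or.inl rfl, Or.inr (Or.inr (Or.inl ⟨1, 2, 3, 4, by norm_num, by norm_num,
    by norm_num, by norm_num, by norm_num, rfl⟩))⟩
  have k4 : ∀ i m k j : ℕ, 1 ≤ i ∧ i < m ∧ m ≤ 4 ∧ 1 ≤ k ∧ k < j ∧ j ≤ 4 ∧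
        ((k < i ∧ m < j) ∨ m < k) → (pA i m)⁻¹ * pA k j * pA i m = pA k j := by
    rintro i m k j ⟨h1, h2, h3, h4, h5, h6, h7⟩
    have := key _ _ ⟨1, Or.inl rfl,
      Or.inr (Or.inr (Or.inr ⟨i, m, k, j, h1, h2, h3, h4, h5, h6, h7, rfl⟩))⟩
    simpa only [map_mul, map_inv, map_zpow, mk_fA, zpow_one, zpow_neg_one] using this
  simp only [cm, map_mul, map_inv, mk_fA, zpow_one, zpow_neg_one, inv_inv] at k3
  exact ⟨k1 1 2 3 (by norm_num), k2 1 2 3 (by norm_num), k1 1 2 4 (by norm_num),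
    k2 1 2 4 (by norm_num), k1 1 3 4 (by norm_num), k2 1 3 4 (by norm_num),
    k1 2 3 4 (by norm_num), k2 2 3 4 (by norm_num), k3, k4 2 3 1 4 (by norm_num),
    k4 1 2 3 4 (by norm_num)⟩

/-! ### The five generators inside `P_4` -/

/-- A subgroup containing the six elements `c_{ij}` is all of `P_4`. -/
lemma eq_top_of_c_mem (H : Subgroup P4) (h11 : c11 ∈ H) (h21 : c21 ∈ H) (h12 : c12 ∈ H)
    (h31 : c31 ∈ H) (h22 : c22 ∈ H) (h13 : c13 ∈ H) : H = ⊤ := by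
  have m12 : pA 1 2 ∈ H := by simpa [c11] using h11
  have m13 : pA 1 3 ∈ H := by
    have := H.inv_mem (H.mul_mem h12 m12)
    simpa [c12] using this
  have m23 : pA 2 3 ∈ H := by
    have := H.inv_mem (H.mul_mem h21 m13)
    simpa [c21] using this
  have m14 : pA 1 4 ∈ H := by
    have := H.inv_mem (H.mul_mem (H.mul_mem h13 m12) m13)
    simpa [c13] using this
  have m24 : pA 2 4 ∈ H := by
    have := H.inv_mem (H.mul_mem (H.mul_mem (H.mul_mem h22 m13) m23) m14)
    simpa [c22] using this
  have m34 : pA 3 4 ∈ H := by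
    have := H.inv_mem (H.mul_mem (H.mul_mem h31 m14) m24)
    simpa [c31] using this
  rw [eq_top_iff, ← PresentedGroup.closure_range_of, Subgroup.closure_le]
  rintro _ ⟨⟨⟨i, j⟩, h⟩, rfl⟩
  have hp : (PresentedGroup.of ⟨(i, j), h⟩ : P4) = pA i j := by
    rw [pA, dif_pos h]
  rw [hp]
  obtain ⟨h1, h2, h3⟩ : 1 ≤ i ∧ i < j ∧ j ≤ 4 := h
  have : (i = 1 ∧ j = 2) ∨ (i = 1 ∧ j = 3) ∨ (i = 2 ∧ j = 3) ∨ (i = 1 ∧ j = 4) ∨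
    (i = 2 ∧ j = 4) ∨ (i = 3 ∧ j = 4) := by omega
  rcases this with ⟨rfl, rfl⟩ | ⟨rfl, rfl⟩ | ⟨rfl, rfl⟩ | ⟨rfl, rfl⟩ | ⟨rfl, rfl⟩ | ⟨rfl, rfl⟩
  exacts [m12, m13, m23, m14, m24, m34]

/-- The full twist, a central element of `P_4`. -/
def twist : P4 := pA 1 2 * pA 1 3 * pA 2 3 * (pA 1 4 * pA 2 4 * pA 3 4)

lemma twist_commute (g : P4) : Commute twist g := by
  obtain ⟨hu, hx, hv, ha, hb, hc⟩ := pb_P4.twist_commute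
  change Commute twist _ at hu hx hv ha hb hc
  have top : Subgroup.centralizer {twist} = (⊤ : Subgroup P4) := by
    apply eq_top_of_c_mem <;> rw [Subgroup.mem_centralizer_singleton_iff]
    · exact hu.inv_right.eq.symm
    · exact (hv.inv_right.mul_right hx.inv_right).eq.symm
    · exact (hx.inv_right.mul_right hu.inv_right).eq.symm
    · exact ((hc.inv_right.mul_right hb.inv_right).mul_right ha.inv_right).eq.symm
    · exact (((hb.inv_right.mul_right ha.inv_right).mul_right hv.inv_right).mul_right
        hx.inv_right).eq.symm
    · exact ((ha.inv_right.mul_right hx.inv_right).mul_right hu.inv_right).eq.symm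
  have : g ∈ Subgroup.centralizer {twist} := top ▸ Subgroup.mem_top g
  rw [Subgroup.mem_centralizer_singleton_iff] at this
  exact this.symm

lemma core_P4 : Core (pA 1 2) (pA 2 3) (pA 1 4) (pA 3 4) c31 := by
  have h : c31 = (pA 1 4 * pA 2 4 * pA 3 4)⁻¹ := by simp [c31, mul_assoc]
  rw [h]
  exact pb_P4.core

lemma c31_eq : c31 = (pA 1 4 * pA 2 4 * pA 3 4)⁻¹ := by simp [c31, mul_assoc]

lemma eq_of_mul_twist {g h : P4} (H : g * twist = h) : g = twist⁻¹ * h := by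
  rw [← H, ← (twist_commute g).eq, inv_mul_cancel_left]

lemma c21_mul_twist : c21 * twist = pA 1 2 * c31⁻¹ := by
  have h : twist = pA 1 3 * pA 2 3 * pA 1 2 * c31⁻¹ := by
    rw [← pb_P4.commute_u_xv.eq, twist, c31_eq]
    simp only [mul_assoc, inv_inv]
  rw [h, c21]
  group

lemma c21_eq : c21 = twist⁻¹ * pA 1 2 * c31⁻¹ := by
  rw [mul_assoc]; exact eq_of_mul_twist c21_mul_twist

lemma c12_eq : c12 = twist⁻¹ * pA 2 3 * c31⁻¹ := by
  rw [mul_assoc]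
  refine eq_of_mul_twist ?_
  rw [c12, twist, c31_eq]
  group

lemma c22_eq : c22 = twist⁻¹ * pA 3 4 * pA 1 2 := by
  rw [mul_assoc]
  refine eq_of_mul_twist ?_
  have h1 : c22 = pA 3 4 * c31 * c21 := by
    rw [c22, c21, c31_eq]
    group
  rw [h1, mul_assoc, c21_mul_twist, core_P4.uw.inv_right.eq]
  group

lemma c13_eq : c13 = (pA 1 4)⁻¹ * c12 := by
  rw [c13, c12, mul_assoc]

lemma d1_eq : d1 = (pA 1 2)⁻¹ * c12 * pA 1 2 := by
  have h1 : Commute c31 c12 := by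
    rw [c12_eq]
    exact (((twist_commute _).symm.inv_right.mul_right core_P4.vw.symm)).mul_right
      (Commute.refl _).inv_right
  calc d1 = (twist⁻¹ * (pA 1 2 * c31⁻¹))⁻¹ * c12 * (twist⁻¹ * (pA 1 2 * c31⁻¹)) := by
        rw [d1, c21_eq, mul_assoc twist⁻¹]
    _ = (pA 1 2 * c31⁻¹)⁻¹ * (twist * c12) * twist⁻¹ * (pA 1 2 * c31⁻¹) := by group
    _ = (pA 1 2 * c31⁻¹)⁻¹ * c12 * (pA 1 2 * c31⁻¹) := by
        rw [(twist_commute c12).eq]; group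
    _ = (pA 1 2)⁻¹ * (c31 * c12 * c31⁻¹) * pA 1 2 := by
        rw [core_P4.uw.inv_right.eq]; group
    _ = _ := by rw [h1.eq]; group

/-- The action of `A₁₂` on the generators of `K`. -/
lemma action_P4 : Base c31 c13 d0 ∧ (pA 1 2)⁻¹ * c31 * pA 1 2 = c31 ∧
    (pA 1 2)⁻¹ * c22 * pA 1 2 = c22 ∧ (pA 1 2)⁻¹ * c13 * pA 1 2 = c22⁻¹ * c13 * c22 ∧
    (pA 1 2)⁻¹ * d1 * pA 1 2 = c22⁻¹ * c22⁻¹ * c13 * c22 * d0 * c13⁻¹ * c22 := by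
  rw [d1_eq]
  exact core_P4.action twist_commute c22 c13 c12 c22_eq c12_eq c13_eq

lemma good_P4 : Good c31 c22 c13 d0 d1 := by
  obtain ⟨h1, h2, h3, h4, h5⟩ := action_P4
  exact good_of_conj h1 h2 h3 h4 d1_eq.symm h5

/-! ### The shift automorphism of the presented group -/

/-- The group with five generators presented by `KGen5.rels`. -/
abbrev Q := PresentedGroup KGen5.rels

namespace Q

/-- The generator `x₃₁` of `Q`. -/
def w : Q := PresentedGroup.of KGen5.x31
/-- The generator `x₂₂` of `Q`. -/
def y : Q := PresentedGroup.of KGen5.x22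
/-- The generator `x₁₃` of `Q`. -/
def e : Q := PresentedGroup.of KGen5.x13
/-- The generator `t₀` of `Q`. -/
def t₀ : Q := PresentedGroup.of KGen5.t0
/-- The generator `t₁` of `Q`. -/
def t₁ : Q := PresentedGroup.of KGen5.t1

lemma good : Good w y e t₀ t₁ := by
  refine (rels_iff_good (fun k => (PresentedGroup.of k : Q))).1 fun r hr => ?_
  have : FreeGroup.lift (fun k => (PresentedGroup.of k : Q)) = PresentedGroup.mk KGen5.rels := by
    ext; simp [PresentedGroup.of]
  rw [this]
  exact PresentedGroup.one_of_mem hr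

/-- Five elements of a group as a function on the generators of `Q`. -/
def gens {G : Type*} (w' y' e' s₀ s₁ : G) : KGen5 → G
  | .x31 => w'
  | .x22 => y'
  | .x13 => e'
  | .t0 => s₀
  | .t1 => s₁

/-- The homomorphism from `Q` given by a solution of `Good`. -/
def lift {G : Type*} [Group G] {w' y' e' s₀ s₁ : G} (h : Good w' y' e' s₀ s₁) : Q →* G :=
  PresentedGroup.toGroup (f := gens w' y' e' s₀ s₁) ((rels_iff_good _).2 h)

section
variable {G : Type*} [Group G] {w' y' e' s₀ s₁ : G} (h : Good w' y' e' s₀ s₁)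

@[simp] lemma lift_w : lift h w = w' := PresentedGroup.toGroup.of _
@[simp] lemma lift_y : lift h y = y' := PresentedGroup.toGroup.of _
@[simp] lemma lift_e : lift h e = e' := PresentedGroup.toGroup.of _
@[simp] lemma lift_t₀ : lift h t₀ = s₀ := PresentedGroup.toGroup.of _
@[simp] lemma lift_t₁ : lift h t₁ = s₁ := PresentedGroup.toGroup.of _
end

lemma hom_ext {G : Type*} [Group G] {f g : Q →* G} (hw : f w = g w) (hy : f y = g y)
    (he : f e = g e) (h0 : f t₀ = g t₀) (h1 : f t₁ = g t₁) : f = g := by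
  refine PresentedGroup.ext fun x => ?_
  cases x
  exacts [hw, hy, he, h0, h1]

lemma good_fwd : Good w y (y⁻¹ * e * y) t₁ (y⁻¹ * y⁻¹ * e * y * t₀ * e⁻¹ * y) :=
  (good_shift _ _ _ _ _).2 good

lemma good_bwd : Good w y (y * e * y⁻¹) (e⁻¹ * y * t₁ * e * y⁻¹) t₀ := by
  refine (good_shift _ _ _ _ _).1 ?_
  have h1 : y⁻¹ * (y * e * y⁻¹) * y = e := by group
  have h2 : y⁻¹ * y⁻¹ * (y * e * y⁻¹) * y * (e⁻¹ * y * t₁ * e * y⁻¹) * (y * e * y⁻¹)⁻¹ * y =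
      t₁ := by group
  rw [h1, h2]
  exact good

/-- The automorphism of `Q` shifting the family of relations by one. It is given on generators by
conjugation with `A₁₂` in `P_4`. -/
def shift : Q ≃* Q :=
  MonoidHom.toMulEquiv (lift good_fwd) (lift good_bwd)
    (by
      apply hom_ext <;>
        simp only [MonoidHom.comp_apply, MonoidHom.id_apply, lift_w, lift_y, lift_e, lift_t₀,
          lift_t₁, map_mul, map_inv] <;> group)
    (by
      apply hom_ext <;>
        simp only [MonoidHom.comp_apply, MonoidHom.id_apply, lift_w, lift_y, lift_e, lift_t₀,
          lift_t₁, map_mul, map_inv] <;> group)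

lemma shift_w : shift w = w := lift_w good_fwd
lemma shift_y : shift y = y := lift_y good_fwd
lemma shift_e : shift e = y⁻¹ * e * y := lift_e good_fwd
lemma shift_t₀ : shift t₀ = t₁ := lift_t₀ good_fwd
lemma shift_t₁ : shift t₁ = y⁻¹ * y⁻¹ * e * y * t₀ * e⁻¹ * y := lift_t₁ good_fwd

lemma base_zero : Base w e t₀ := by
  have := (good 0).1
  simpa [eSh, dEven] using this

lemma base_two : Base w (y⁻¹ * y⁻¹ * e * y * y) (y⁻¹ * y⁻¹ * e * y * t₀ * e⁻¹ * y) := by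
  have h := (base_zero.map shift.toMonoidHom).map shift.toMonoidHom
  simp only [MulEquiv.coe_toMonoidHom, shift_w, shift_e, shift_t₀, shift_t₁, map_mul, map_inv,
    shift_y] at h
  simpa [mul_assoc] using h

/-! ### The map from `P_4` to the semidirect product -/

/-- The semidirect product of `Q` with the infinite cyclic group acting by the shift. -/
abbrev SD := Q ⋊[zpowersHom (MulAut Q) shift] Multiplicative ℤ

/-- The image of `A₁₂⁻¹` in the semidirect product. -/
def s : SD := SemidirectProduct.inr (Multiplicative.ofAdd 1)

lemma s_conj (q : Q) : s * SemidirectProduct.inl q * s⁻¹ = (SemidirectProduct.inl (shift q) : SD) := by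
  have := SemidirectProduct.inl_aut (φ := zpowersHom (MulAut Q) shift) (Multiplicative.ofAdd 1) q
  rw [s, ← map_inv, ← this]
  simp

/-- The semidirect product satisfies the relations of `P_4` modulo its full twist. -/
lemma core_SD : Core s⁻¹ (SemidirectProduct.inl (t₀ * w)) (SemidirectProduct.inl (t₀ * e⁻¹))
    (SemidirectProduct.inl y * s) (SemidirectProduct.inl w : SD) := by
  have hsw : Commute s (SemidirectProduct.inl w : SD) := by
    have := s_conj w
    rw [shift_w] at this
    exact mul_inv_eq_iff_eq_mul.1 this
  have hsy : Commute s (SemidirectProduct.inl y : SD) := by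
    have := s_conj y
    rw [shift_y] at this
    exact mul_inv_eq_iff_eq_mul.1 this
  have hwt : Commute w t₀ := base_zero.1
  have hve : Commute (t₀ * w) e := by
    have := base_zero.2
    change t₀ * w * e = e * (t₀ * w)
    rw [← mul_assoc, this]; group
  have hvt : Commute (t₀ * w) t₀ := (Commute.refl t₀).mul_left hwt
  refine ⟨hsw.inv_left, (hsy.mul_right (Commute.refl s)).inv_left, ?_, ?_, ?_, ?_⟩
  · exact (hwt.symm.mul_left (Commute.refl w)).map (SemidirectProduct.inl : Q →* SD)
  · exact (hvt.mul_right hve.inv_right).map (SemidirectProduct.inl : Q →* SD)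
  · -- After a further shift this is the relation `w⁻¹ (e₂⁻¹ d₂) w = d₂ e₂⁻¹`.
    set i : Q →* SD := SemidirectProduct.inl with hi
    have h2 : w * (y⁻¹ * y⁻¹ * (e * y * t₀) * e⁻¹ * y * y⁻¹ * y⁻¹ * e⁻¹ * y * y) =
        y⁻¹ * t₀ * e⁻¹ * y * w := by
      obtain ⟨b1, b2⟩ := base_two
      set d := y⁻¹ * y⁻¹ * e * y * t₀ * e⁻¹ * y with hd
      set f := y⁻¹ * y⁻¹ * e * y * y with hf
      have e1 : y⁻¹ * y⁻¹ * (e * y * t₀) * e⁻¹ * y * y⁻¹ * y⁻¹ * e⁻¹ * y * y = d * f⁻¹ := by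
        rw [hd, hf]; simp [mul_assoc]
      have e2 : y⁻¹ * t₀ * e⁻¹ * y = f⁻¹ * d := by
        rw [hd, hf]; simp [mul_assoc]
      rw [e1, e2]
      have e3 : d = f⁻¹ * (d * (w * f * w⁻¹)) := by rw [← b2]; group
      calc w * (d * f⁻¹) = w * d * f⁻¹ := by group
        _ = f⁻¹ * (d * (w * f * w⁻¹)) * w * f⁻¹ := by rw [b1, ← e3]
        _ = _ := by group
    have h1 : shift (shift (t₀ * e⁻¹)) = w⁻¹ * (y⁻¹ * (t₀ * e⁻¹) * y) * w := by
      rw [← mul_right_inj w]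
      simp only [map_mul, map_inv, shift_t₀, shift_t₁, shift_e, shift_y]
      simp only [mul_assoc, mul_inv_rev, inv_inv, mul_inv_cancel_left] at h2 ⊢
      exact h2
    have h3 : s * (s * i (t₀ * e⁻¹) * s⁻¹) * s⁻¹ =
        (i w)⁻¹ * ((i y)⁻¹ * i (t₀ * e⁻¹) * i y) * i w := by
      rw [hi, s_conj, s_conj, h1]; simp only [map_mul, map_inv]
    have h4 : s⁻¹ * (i w)⁻¹ = (i w)⁻¹ * s⁻¹ := hsw.inv_left.inv_right.eq
    have h5 : i w * s = s * i w := hsw.eq.symm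
    calc s⁻¹⁻¹ * i (t₀ * e⁻¹) * s⁻¹ = s⁻¹ * (s * (s * i (t₀ * e⁻¹) * s⁻¹) * s⁻¹) * s := by group
      _ = (s⁻¹ * (i w)⁻¹) * ((i y)⁻¹ * i (t₀ * e⁻¹) * i y) * (i w * s) := by
          rw [h3]; simp only [mul_assoc]
      _ = _ := by rw [h4, h5]; group
  · set i : Q →* SD := SemidirectProduct.inl with hi
    -- Moving `s` to the right on both sides brings the identity into `Q`.
    have h1 : (t₀ * w)⁻¹ * y * shift (t₀ * w) =
        (t₀ * e⁻¹)⁻¹ * w⁻¹ * y * shift (w * (t₀ * e⁻¹)) := by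
      have g1 : shift (w * (t₀ * e⁻¹)) = shift e⁻¹ * shift (t₀ * w) := by
        rw [← map_mul, ← hve.inv_right.eq, hwt.eq.symm]
        simp only [mul_assoc]
      have g2 : (t₀ * e⁻¹)⁻¹ * w⁻¹ = (t₀ * w)⁻¹ * e := by
        rw [hve.inv_left.eq, ← hwt.eq]; group
      rw [g1, g2, map_inv, shift_e]; group
    have h2 : ∀ q, s * i q = i (shift q) * s := fun q => by rw [hi, ← s_conj q]; group
    calc (i (t₀ * w))⁻¹ * (i y * s) * i (t₀ * w)
        = (i (t₀ * w))⁻¹ * i y * (s * i (t₀ * w)) := by group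
      _ = i ((t₀ * w)⁻¹ * y * shift (t₀ * w)) * s := by
          rw [h2]; simp only [map_mul, map_inv, mul_assoc]
      _ = (i (t₀ * e⁻¹))⁻¹ * (i w)⁻¹ * i y * (i (shift (w * (t₀ * e⁻¹))) * s) := by
          rw [h1]; simp only [map_mul, map_inv, mul_assoc]
      _ = _ := by rw [← h2, map_mul i w]; group

/-- The images of the `A_{i,j}` in the semidirect product. -/
def img : ℕ → ℕ → SD
  | 1, 2 => s⁻¹
  | 1, 3 => SemidirectProduct.inl w * s⁻¹⁻¹ * (SemidirectProduct.inl (t₀ * w))⁻¹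
  | 2, 3 => SemidirectProduct.inl (t₀ * w)
  | 1, 4 => SemidirectProduct.inl (t₀ * e⁻¹)
  | 2, 4 => (SemidirectProduct.inl (t₀ * e⁻¹))⁻¹ * (SemidirectProduct.inl w)⁻¹ *
      (SemidirectProduct.inl y * s)⁻¹
  | 3, 4 => SemidirectProduct.inl y * s
  | _, _ => 1

/-- The map from `P_4` to the semidirect product, killing the full twist. -/
def toSD : P4 →* SD :=
  PresentedGroup.toGroup (f := fun p : PGen => img p.1.1 p.1.2) (PB.rels img core_SD.pb)

lemma toSD_pA {i j : ℕ} (h : 1 ≤ i ∧ i < j ∧ j ≤ 4) : toSD (pA i j) = img i j := by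
  rw [pA, dif_pos h]
  exact PresentedGroup.toGroup.of _

/-- The natural map from `Q` to `P_4`. -/
def toP4 : Q →* P4 := lift good_P4

lemma toSD_comp_toP4 : toSD.comp toP4 = SemidirectProduct.inl := by
  have h12 : toSD (pA 1 2) = s⁻¹ := toSD_pA (by norm_num)
  have h13 : toSD (pA 1 3) = SemidirectProduct.inl w * s⁻¹⁻¹ * (SemidirectProduct.inl (t₀ * w))⁻¹ :=
    toSD_pA (by norm_num)
  have h23 : toSD (pA 2 3) = SemidirectProduct.inl (t₀ * w) := toSD_pA (by norm_num)
  have h14 : toSD (pA 1 4) = SemidirectProduct.inl (t₀ * e⁻¹) := toSD_pA (by norm_num)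
  have h24 : toSD (pA 2 4) = (SemidirectProduct.inl (t₀ * e⁻¹))⁻¹ * (SemidirectProduct.inl w)⁻¹ *
      (SemidirectProduct.inl y * s)⁻¹ := toSD_pA (by norm_num)
  have h34 : toSD (pA 3 4) = SemidirectProduct.inl y * s := toSD_pA (by norm_num)
  have hw : toSD c31 = SemidirectProduct.inl w := by
    rw [c31]; simp only [map_mul, map_inv, h14, h24, h34]; group
  have ht : toSD twist = 1 := by
    have huw := core_SD.uw.eq
    rw [twist]
    simp only [MonoidHom.map_mul toSD, h12, h13, h23, h14, h24, h34]
    generalize (SemidirectProduct.inl (t₀ * w) : SD) = V at *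
    generalize (SemidirectProduct.inl (t₀ * e⁻¹) : SD) = A at *
    generalize (SemidirectProduct.inl w : SD) = W at *
    calc _ = s⁻¹ * W * s * W⁻¹ := by group
      _ = 1 := by rw [huw]; group
  have h0 : toSD c12 = SemidirectProduct.inl t₀ := by
    rw [c12_eq]; simp only [map_mul, map_inv, ht, h23, hw]; group
  have he : toSD c13 = SemidirectProduct.inl e := by
    rw [c13_eq, map_mul, map_inv, h0, h14, ← map_inv, ← map_mul]; congr 1; group
  have hy : toSD c22 = SemidirectProduct.inl y := by
    rw [c22_eq]; simp only [map_mul, map_inv, ht, h34, h12]; group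
  have h1 : toSD d1 = SemidirectProduct.inl t₁ := by
    rw [d1_eq, ← shift_t₀, ← s_conj]; simp only [map_mul, map_inv, h0, h12, inv_inv]
  apply hom_ext <;> simp only [MonoidHom.comp_apply, toP4, lift_w, lift_y, lift_e, lift_t₀, lift_t₁]
  exacts [hw, hy, he, h0, h1]

lemma toP4_injective : Function.Injective toP4 := by
  have h : Function.Injective (toSD.comp toP4) := by
    rw [toSD_comp_toP4]; exact SemidirectProduct.inl_injective
  exact Function.Injective.of_comp (f := toSD) h

/-! ### The image of `Q` is the kernel of `φ` -/

lemma toP4_range : toP4.range = Subgroup.closure {c31, c22, c13, d0, d1} := by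
  rw [MonoidHom.range_eq_map, ← PresentedGroup.closure_range_of, MonoidHom.map_closure]
  congr 1
  ext g
  simp only [Set.mem_image, Set.mem_range, exists_exists_eq_and, Set.mem_insert_iff,
    Set.mem_singleton_iff]
  have a1 : toP4 (PresentedGroup.of .x31) = c31 := lift_w good_P4
  have a2 : toP4 (PresentedGroup.of .x22) = c22 := lift_y good_P4
  have a3 : toP4 (PresentedGroup.of .x13) = c13 := lift_e good_P4
  have a4 : toP4 (PresentedGroup.of .t0) = d0 := lift_t₀ good_P4
  have a5 : toP4 (PresentedGroup.of .t1) = d1 := lift_t₁ good_P4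
  constructor
  · rintro ⟨k, rfl⟩
    cases k <;> simp [a1, a2, a3, a4, a5]
  · rintro (rfl | rfl | rfl | rfl | rfl)
    exacts [⟨_, a1⟩, ⟨_, a2⟩, ⟨_, a3⟩, ⟨_, a4⟩, ⟨_, a5⟩]

lemma toP4_shift (q : Q) : toP4 (shift q) = (pA 1 2)⁻¹ * toP4 q * pA 1 2 := by
  have h : toP4.comp shift.toMonoidHom = (MulAut.conj (pA 1 2)⁻¹).toMonoidHom.comp toP4 := by
    obtain ⟨-, b2, b3, b4, b5⟩ := action_P4
    apply hom_ext <;>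
      simp only [MonoidHom.comp_apply, MulEquiv.coe_toMonoidHom, shift_w, shift_y, shift_e,
        shift_t₀, shift_t₁, map_mul, map_inv, toP4, lift_w, lift_y, lift_e, lift_t₀, lift_t₁,
        MulEquiv.coe_toMonoidHom, MulAut.conj_inv_apply]
    exacts [b2.symm, b3.symm, b4.symm, d1_eq, b5.symm]
  have := DFunLike.congr_fun h q
  simpa using this

lemma mem_toP4_range : c31 ∈ toP4.range ∧ c22 ∈ toP4.range ∧ c13 ∈ toP4.range ∧
    c12 ∈ toP4.range :=
  ⟨⟨w, lift_w good_P4⟩, ⟨y, lift_y good_P4⟩, ⟨e, lift_e good_P4⟩, ⟨t₀, lift_t₀ good_P4⟩⟩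

lemma toP4_range_normal : toP4.range.Normal := by
  obtain ⟨m31, m22, m13, m12⟩ := mem_toP4_range
  have hu : pA 1 2 ∈ Subgroup.normalizer (toP4.range : Set P4) := by
    rw [← inv_mem_iff, Subgroup.mem_normalizer_iff]
    intro g
    rw [inv_inv]
    constructor
    · rintro ⟨q, rfl⟩
      exact ⟨shift q, toP4_shift q⟩
    · rintro ⟨q, hq⟩
      refine ⟨shift.symm q, ?_⟩
      have := toP4_shift (shift.symm q)
      rw [MulEquiv.apply_symm_apply, hq] at this
      simpa using this.symm
  have hz : twist ∈ Subgroup.normalizer (toP4.range : Set P4) := by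
    rw [Subgroup.mem_normalizer_iff]
    intro g
    rw [(twist_commute g).eq, mul_inv_cancel_right]
  have le := Subgroup.le_normalizer (H := toP4.range)
  rw [← Subgroup.normalizer_eq_top_iff]
  refine eq_top_of_c_mem _ (inv_mem hu) ?_ (le m12) (le m31) (le m22) (le m13)
  rw [c21_eq]
  exact mul_mem (mul_mem (inv_mem hz) hu) (inv_mem (le m31))

lemma commute_c11_c21 : Commute c11 c21 := by
  have h := pb_P4.commute_u_xv.inv_left.inv_right
  rwa [mul_inv_rev] at h

lemma toP4_range_eq_ker (φ : P4 →* Multiplicative (ℤ × ℤ))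
    (hφ : φ c11 = Multiplicative.ofAdd (1, 0) ∧ φ c21 = Multiplicative.ofAdd (0, 1) ∧
          φ c12 = 1 ∧ φ c31 = 1 ∧ φ c22 = 1 ∧ φ c13 = 1) :
    toP4.range = φ.ker := by
  obtain ⟨h11, h21, h12, h31, h22, h13⟩ := hφ
  obtain ⟨m31, m22, m13, m12⟩ := mem_toP4_range
  have := toP4_range_normal
  apply le_antisymm
  · rw [toP4_range, Subgroup.closure_le]
    rintro g (rfl | rfl | rfl | rfl | rfl) <;> rw [SetLike.mem_coe, MonoidHom.mem_ker]
    · exact h31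
    · exact h22
    · exact h13
    · exact h12
    · rw [d1, map_mul, map_mul, h12]; simp
  · -- The quotient map by the range factors through `φ`, via `(i, j) ↦ c₁₁ⁱ c₂₁ʲ`.
    let π : P4 →* P4 ⧸ toP4.range := QuotientGroup.mk' _
    have hc : Commute (π c11) (π c21) := commute_c11_c21.map π
    let ρ : Multiplicative (ℤ × ℤ) →* P4 ⧸ toP4.range := MonoidHom.mk'
      (fun p => π c11 ^ p.toAdd.1 * π c21 ^ p.toAdd.2) (by
        intro p q
        simp only [toAdd_mul, Prod.fst_add, Prod.snd_add, zpow_add]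
        have := (hc.zpow_zpow q.toAdd.1 p.toAdd.2).eq
        simp only [mul_assoc]
        rw [← mul_assoc (π c11 ^ (Multiplicative.toAdd q).1), this]
        simp only [mul_assoc])
    have π1 : ∀ g ∈ toP4.range, π g = 1 := fun g hg => (QuotientGroup.eq_one_iff g).2 hg
    have heq : (ρ.comp φ).eqLocus π = ⊤ := by
      apply eq_top_of_c_mem <;> change ρ (φ _) = π _
      · rw [h11]; simp [ρ]
      · rw [h21]; simp [ρ]
      · rw [h12, π1 _ m12, map_one]
      · rw [h31, π1 _ m31, map_one]
      · rw [h22, π1 _ m22, map_one]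
      · rw [h13, π1 _ m13, map_one]
    intro g hg
    have h : ρ (φ g) = π g := by
      have : g ∈ (ρ.comp φ).eqLocus π := heq ▸ Subgroup.mem_top g
      exact this
    rw [MonoidHom.mem_ker.1 hg, map_one] at h
    exact (QuotientGroup.eq_one_iff g).1 h.symm

end Q

/-- Proposition 4.6: for the homomorphism `φ : P_4 → ℤ²` of the paper, `K = Ker(φ)` is
generated by `c_{31}, c_{22}, c_{13}, d_0, d_1` and is presented by these five generators
and the relations of Lemmas 4.3–4.5. -/
theorem statement9 (φ : P4 →* Multiplicative (ℤ × ℤ))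
    (hφ : φ c11 = Multiplicative.ofAdd (1, 0) ∧ φ c21 = Multiplicative.ofAdd (0, 1) ∧
          φ c12 = 1 ∧ φ c31 = 1 ∧ φ c22 = 1 ∧ φ c13 = 1) :
    Subgroup.closure {c31, c22, c13, d0, d1} = φ.ker ∧
    ∃ f : PresentedGroup KGen5.rels →* P4,
      f (PresentedGroup.of KGen5.x31) = c31 ∧
      f (PresentedGroup.of KGen5.x22) = c22 ∧
      f (PresentedGroup.of KGen5.x13) = c13 ∧
      f (PresentedGroup.of KGen5.t0) = d0 ∧
      f (PresentedGroup.of KGen5.t1) = d1 ∧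
      Function.Injective f ∧
      f.range = φ.ker := by
  have hr := Q.toP4_range_eq_ker φ hφ
  exact ⟨Q.toP4_range ▸ hr, Q.toP4, Q.lift_w _, Q.lift_y _, Q.lift_e _, Q.lift_t₀ _, Q.lift_t₁ _,
    Q.toP4_injective, hr⟩

end Paper
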